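/- Let two budget profiles be given: profile P (integer m ≥ 1, strictly increasing positive real privacy budgets ε_1 < ⋯ < ε_m, positive integer counts n_1, …, n_m, n = Σ n_j, Z = (n − n_m)(n − n_m + 1/4)) and profile P̃ (integer q ≥ 1, strictly increasing positive real privacy budgets ε̃_1 < ⋯ < ε̃_q, positive integer counts ñ_1, …, ñ_q, ñ = Σ ñ_j, Z̃ = (ñ − ñ_q)(ñ − ñ_q + 1/4)), both with sensitivity I = 1. Let α > w_L ≥ 1 be integers. Then Σ_{k=1}^{w_L} errO_1^{P}(k) + (α − w_L + 1) · errO_1^{P̃}(1) ≤ min( (2/ε_1²)·H²_{w_L} , w_L·Z + (2/ε_m²)·H²_{w_L} ) + (α − w_L + 1) · min( 2/ε̃_1² , Z̃ + 2/ε̃_q² ). (This is the bound err^{(s,p)}_NOP in the proof of Theorem 3, case α > w_L, for Personalized Budget Absorption: the publication budget lower bound grows linearly for the first w_L slots and is then capped, yielding the capped profile P̃ with minimum budget ε̃_1 and maximum budget ε̃_q for the remaining α − w_L + 1 slots.) -/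

import Mathlib

/-!
The OBS error is a minimum over the thresholds `ε_j`, so the error at any one of them bounds it. At
`ε_1` nobody is sampled and only noise remains. If `c` users have a budget below `θ`, then the
sampling variance is at most `c / 4`, since `p (1 - p) ≤ 1 / 4`, and the sampling bias is at most
`c`, so `err_s(θ) ≤ c (c + 1 / 4)`; at `ε_m`, where `c ≤ n - n_m`, this is at most `Z`. Scaling the
budgets by `k` keeps both bounds on the sampling error and divides the noise error by `k²`.
-/

open Finset

/-- Sampling probability p_k(θ) = (e^{ε_k} − 1)/(e^{θ} − 1). -/
noncomputable def samplingP {m : ℕ} (ε : Fin m → ℝ) (k : Fin m) (θ : ℝ) : ℝ :=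
  (Real.exp (ε k) - 1) / (Real.exp θ - 1)

/-- Sampling error err_s(θ). -/
noncomputable def errS {m : ℕ} (ε : Fin m → ℝ) (nn : Fin m → ℕ) (θ : ℝ) : ℝ :=
  (∑ k, if ε k < θ then (nn k : ℝ) * samplingP ε k θ * (1 - samplingP ε k θ) else 0)
    + (∑ k, if ε k < θ then (nn k : ℝ) * (1 - samplingP ε k θ) else 0) ^ 2

/-- Noise error err_dp(θ) = 2I²/θ². -/
noncomputable def errDP (I θ : ℝ) : ℝ := 2 * I ^ 2 / θ ^ 2

/-- Total error err(θ) = err_s(θ) + err_dp(θ). -/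
noncomputable def errTot {m : ℕ} (ε : Fin m → ℝ) (nn : Fin m → ℕ) (I θ : ℝ) : ℝ :=
  errS ε nn θ + errDP I θ

/-- OBS error: errO_I = min_{1 ≤ j ≤ m} err(ε_j). -/
noncomputable def errO {m : ℕ} (hm : 0 < m) (ε : Fin m → ℝ) (nn : Fin m → ℕ) (I : ℝ) : ℝ :=
  Finset.univ.inf' (Finset.univ_nonempty_iff.mpr (Fin.pos_iff_nonempty.mp hm))
    (fun j => errTot ε nn I (ε j))

/-- Index of the smallest budget ε_1. -/
def firstIdx {m : ℕ} (hm : 0 < m) : Fin m := ⟨0, hm⟩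

/-- Index of the largest budget ε_m. -/
def lastIdx {m : ℕ} (hm : 0 < m) : Fin m := ⟨m - 1, Nat.sub_lt hm Nat.one_pos⟩

/-- Z = (n − n_m)(n − n_m + 1/4). -/
noncomputable def Zval {m : ℕ} (hm : 0 < m) (nn : Fin m → ℕ) : ℝ :=
  ((∑ j, (nn j : ℝ)) - nn (lastIdx hm)) * ((∑ j, (nn j : ℝ)) - nn (lastIdx hm) + 1 / 4)

/-- N-th square harmonic number H²_N = Σ_{k=1}^N 1/k². -/
noncomputable def sqHarmonic (N : ℕ) : ℝ := ∑ k ∈ Finset.Icc 1 N, 1 / (k : ℝ) ^ 2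

lemma errDP_mul (I β θ : ℝ) : errDP I (β * θ) = errDP I θ * (1 / β ^ 2) := by
  rw [errDP, errDP, mul_pow, div_mul_div_comm, mul_one, mul_comm (β ^ 2)]

lemma sum_errDP_natCast_mul (I θ : ℝ) (N : ℕ) :
    ∑ k ∈ Icc 1 N, errDP I (k * θ) = errDP I θ * sqHarmonic N := by
  simp only [errDP_mul, sqHarmonic, mul_sum]

section Profile

variable {m : ℕ} (ε : Fin m → ℝ) (nn : Fin m → ℕ)

/-- The number of users with budget strictly below the threshold `θ`, who are the ones subjected to
sampling. It is real-valued, like the error bounds expressed through it. -/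
noncomputable def countBelow (θ : ℝ) : ℝ :=
  ∑ k with ε k < θ, (nn k : ℝ)

lemma countBelow_nonneg (θ : ℝ) : 0 ≤ countBelow ε nn θ :=
  sum_nonneg fun _ _ => Nat.cast_nonneg _

lemma countBelow_budget_le (j : Fin m) :
    countBelow ε nn (ε j) ≤ (∑ k, (nn k : ℝ)) - nn j := by
  have below_subset : ({k | ε k < ε j} : Finset (Fin m)) ⊆ univ.erase j := fun k hk =>
    mem_erase.mpr ⟨fun hkj => (mem_filter.mp hk).2.ne (congrArg ε hkj), mem_univ k⟩
  calc countBelow ε nn (ε j)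
      ≤ ∑ k ∈ univ.erase j, (nn k : ℝ) :=
        sum_le_sum_of_subset_of_nonneg below_subset fun _ _ _ => Nat.cast_nonneg _
    _ = (∑ k, (nn k : ℝ)) - nn j := sum_erase_eq_sub (mem_univ j)

variable {ε} in
lemma samplingP_mem_Icc {k : Fin m} {θ : ℝ} (hk : 0 ≤ ε k) (hkθ : ε k ≤ θ) :
    samplingP ε k θ ∈ Set.Icc (0 : ℝ) 1 := by
  have num_nonneg : 0 ≤ Real.exp (ε k) - 1 := sub_nonneg.mpr (Real.one_le_exp hk)
  have num_le_den : Real.exp (ε k) - 1 ≤ Real.exp θ - 1 :=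
    sub_le_sub_right (Real.exp_le_exp.mpr hkθ) 1
  have den_nonneg := num_nonneg.trans num_le_den
  exact ⟨div_nonneg num_nonneg den_nonneg, div_le_one_of_le₀ num_le_den den_nonneg⟩

lemma sampling_variance_le (θ : ℝ) :
    ∑ k with ε k < θ, (nn k : ℝ) * samplingP ε k θ * (1 - samplingP ε k θ) ≤
      countBelow ε nn θ * (1 / 4) := by
  have mul_one_sub_le (p : ℝ) : p * (1 - p) ≤ 1 / 4 := by linarith [sq_nonneg (p - 1 / 2)]
  simp only [countBelow, sum_mul, mul_assoc]
  exact sum_le_sum fun k _ => mul_le_mul_of_nonneg_left (mul_one_sub_le _) (Nat.cast_nonneg _)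

variable {ε}

lemma sampling_bias_nonneg (hε : ∀ k, 0 ≤ ε k) (θ : ℝ) :
    0 ≤ ∑ k with ε k < θ, (nn k : ℝ) * (1 - samplingP ε k θ) :=
  sum_nonneg fun k hk => mul_nonneg (Nat.cast_nonneg _) <|
    sub_nonneg.mpr (samplingP_mem_Icc (hε k) (mem_filter.mp hk).2.le).2

lemma sampling_bias_le (hε : ∀ k, 0 ≤ ε k) (θ : ℝ) :
    ∑ k with ε k < θ, (nn k : ℝ) * (1 - samplingP ε k θ) ≤ countBelow ε nn θ :=
  sum_le_sum fun k hk => mul_le_of_le_one_right (Nat.cast_nonneg _) <|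
    sub_le_self 1 (samplingP_mem_Icc (hε k) (mem_filter.mp hk).2.le).1

lemma errS_le_countBelow_mul (hε : ∀ k, 0 ≤ ε k) (θ : ℝ) :
    errS ε nn θ ≤ countBelow ε nn θ * (countBelow ε nn θ + 1 / 4) := by
  calc errS ε nn θ
      = ∑ k with ε k < θ, (nn k : ℝ) * samplingP ε k θ * (1 - samplingP ε k θ)
          + (∑ k with ε k < θ, (nn k : ℝ) * (1 - samplingP ε k θ)) ^ 2 := by
        simp only [errS, sum_filter]
    _ ≤ countBelow ε nn θ * (1 / 4) + countBelow ε nn θ ^ 2 :=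
        add_le_add (sampling_variance_le ε nn θ)
          (pow_le_pow_left₀ (sampling_bias_nonneg nn hε θ) (sampling_bias_le nn hε θ) 2)
    _ = countBelow ε nn θ * (countBelow ε nn θ + 1 / 4) := by ring

variable {nn} in
lemma errO_le_errTot (hm : 0 < m) (I : ℝ) (j : Fin m) : errO hm ε nn I ≤ errTot ε nn I (ε j) :=
  inf'_le _ (mem_univ j)

lemma errS_first (hm : 0 < m) (hmono : Monotone ε) : errS ε nn (ε (firstIdx hm)) = 0 := by
  have first_le (k : Fin m) : ε (firstIdx hm) ≤ ε k := hmono (Nat.zero_le k)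
  simp [errS, (first_le _).not_gt]

lemma errS_last_le_Zval (hm : 0 < m) (hε : ∀ k, 0 ≤ ε k) :
    errS ε nn (ε (lastIdx hm)) ≤ Zval hm nn := by
  have count_nonneg := countBelow_nonneg ε nn (ε (lastIdx hm))
  have count_le := countBelow_budget_le ε nn (lastIdx hm)
  refine (errS_le_countBelow_mul nn hε _).trans ?_
  unfold Zval
  gcongr
  exact count_nonneg.trans count_le

lemma errO_le_errDP_first (hm : 0 < m) (hmono : Monotone ε) (I : ℝ) :
    errO hm ε nn I ≤ errDP I (ε (firstIdx hm)) :=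
  calc errO hm ε nn I ≤ errTot ε nn I (ε (firstIdx hm)) := errO_le_errTot hm I _
    _ = errDP I (ε (firstIdx hm)) := by rw [errTot, errS_first nn hm hmono, zero_add]

lemma errO_le_Zval_add_errDP_last (hm : 0 < m) (hε : ∀ k, 0 ≤ ε k) (I : ℝ) :
    errO hm ε nn I ≤ Zval hm nn + errDP I (ε (lastIdx hm)) :=
  (errO_le_errTot hm I _).trans (add_le_add_left (errS_last_le_Zval nn hm hε) _)

lemma sum_errO_scaled_le_min (hm : 0 < m) (hε : ∀ j, 0 ≤ ε j) (hmono : Monotone ε) (I : ℝ)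
    (N : ℕ) :
    ∑ k ∈ Icc 1 N, errO hm (fun j => (k : ℝ) * ε j) nn I ≤
      min (errDP I (ε (firstIdx hm)) * sqHarmonic N)
        (N * Zval hm nn + errDP I (ε (lastIdx hm)) * sqHarmonic N) := by
  refine le_min ?_ ?_
  · rw [← sum_errDP_natCast_mul]
    exact sum_le_sum fun k _ =>
      errO_le_errDP_first nn hm (hmono.const_mul k.cast_nonneg) I
  · calc ∑ k ∈ Icc 1 N, errO hm (fun j => (k : ℝ) * ε j) nn I
        ≤ ∑ k ∈ Icc 1 N, (Zval hm nn + errDP I (k * ε (lastIdx hm))) :=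
          sum_le_sum fun k _ =>
            errO_le_Zval_add_errDP_last nn hm (fun j => mul_nonneg k.cast_nonneg (hε j)) I
      _ = N * Zval hm nn + errDP I (ε (lastIdx hm)) * sqHarmonic N := by
          rw [sum_add_distrib, sum_errDP_natCast_mul]
          simp

end Profile

/-- Bound err^{(s,p)}_NOP in the proof of Theorem 3, case α > w_L, for Personalized
Budget Absorption, with the original profile P and the capped profile P̃. -/
theorem pba_skipped_obs_error_bound_capped
    (m : ℕ) (hm : 0 < m) (ε : Fin m → ℝ) (nn : Fin m → ℕ)
    (hpos : ∀ j, 0 < ε j) (hmono : StrictMono ε) (hcount : ∀ j, 0 < nn j)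
    (q : ℕ) (hq : 0 < q) (ε' : Fin q → ℝ) (nn' : Fin q → ℕ)
    (hpos' : ∀ j, 0 < ε' j) (hmono' : StrictMono ε') (hcount' : ∀ j, 0 < nn' j)
    (wL α : ℕ) (hwL : 1 ≤ wL) (hα : wL < α) :
    ∑ k ∈ Finset.Icc 1 wL, errO hm (fun j => (k : ℝ) * ε j) nn 1
        + ((α - wL + 1 : ℕ) : ℝ) * errO hq ε' nn' 1 ≤
      min ((2 / (ε (firstIdx hm)) ^ 2) * sqHarmonic wL)
          ((wL : ℝ) * Zval hm nn + (2 / (ε (lastIdx hm)) ^ 2) * sqHarmonic wL)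
        + ((α - wL + 1 : ℕ) : ℝ) *
            min (2 / (ε' (firstIdx hq)) ^ 2)
              (Zval hq nn' + 2 / (ε' (lastIdx hq)) ^ 2) := by
  have errDP_one (θ : ℝ) : errDP 1 θ = 2 / θ ^ 2 := by rw [errDP, one_pow, mul_one]
  have scaled_le := sum_errO_scaled_le_min nn hm (fun j => (hpos j).le) hmono.monotone 1 wL
  have capped_le := le_min (errO_le_errDP_first nn' hq hmono'.monotone 1)
    (errO_le_Zval_add_errDP_last nn' hq (fun j => (hpos' j).le) 1)
  simp only [errDP_one] at scaled_le capped_le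
  gcongr
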